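/- Every bounded linear operator T from L_∞[0,1] into a Banach space X containing no subspace isomorphic to c₀ is weakly compact, and hence strictly singular. -/

import Mathlib

open MeasureTheory ENNReal Filter Set ZeroAtInfty

/-- Lebesgue measure on `[0,1]`. -/
noncomputable def μ01 : Measure ℝ := volume.restrict (Set.Icc 0 1)

instance : Fact (volume (Set.Icc (0:ℝ) 1) < ∞) := ⟨by simp⟩
instance : IsFiniteMeasure μ01 := ⟨by simp [μ01]⟩

/-- An operator is strictly singular if it is bounded below on no infinite-dimensional
closed subspace. -/
def StrictlySingular {E F : Type*} [NormedAddCommGroup E] [NormedSpace ℝ E]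
    [NormedAddCommGroup F] [NormedSpace ℝ F] (T : E →L[ℝ] F) : Prop :=
  ∀ Y : Submodule ℝ E, IsClosed (Y : Set E) → ¬ FiniteDimensional ℝ Y →
    ¬ ∃ c : ℝ, 0 < c ∧ ∀ y ∈ Y, c * ‖y‖ ≤ ‖T y‖

/-- `X` contains a subspace isomorphic to `c₀`: there is an isomorphic embedding of
`c₀ = C₀(ℕ, ℝ)` into `X`. -/
def ContainsC0 (X : Type*) [NormedAddCommGroup X] [NormedSpace ℝ X] : Prop :=
  ∃ (e : C₀(ℕ, ℝ) →L[ℝ] X) (c : ℝ), 0 < c ∧ ∀ f, c * ‖f‖ ≤ ‖e f‖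

/-- A bounded operator is weakly compact if the image of the closed unit ball is
relatively compact in the weak topology. -/
def WeaklyCompactOperator {E X : Type*} [NormedAddCommGroup E] [NormedSpace ℝ E]
    [NormedAddCommGroup X] [NormedSpace ℝ X] (T : E →L[ℝ] X) : Prop :=
  IsCompact (closure ((fun x => toWeakSpaceCLM ℝ X (T x)) ''
    Metric.closedBall 0 1))

/-!
Suppose `T : L_∞(μ) → X` fixes no copy of `c₀`. If disjoint functions of norm at most one had
images bounded away from zero, Rosenthal's disjointification of their norming functionals would
produce a subsequence on which `T` is bounded below, that is, a fixed copy of `c₀`. So the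
semivariation of the vector measure of `T` is exhaustive, hence controlled up to `ε` by finitely
many positive functionals lying below it. Adding them up gives one positive functional `l` with
`‖T f‖ ≤ √(l (f²)) + ε ‖f‖`: up to `ε`, the operator `T` is dominated by a Hilbertian seminorm. By
the parallelogram law, near-minimizers of this seminorm in a convex set of functions are close to
each other, so `T` nearly sends them to one point; this gives weak compactness. Strict singularity
is Grothendieck's dimension count: on a subspace where `T` is bounded below, `√(l (f²))` dominates
a multiple of the sup norm, and such a subspace has bounded dimension because an `l`-orthonormal
family `f i` in it has `∑ (f i)²` bounded by a constant independent of its size.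
-/

open scoped Topology lp

section Rosenthal

/-- The induction is on the number `N` of times `δ` may be exceeded: if every block `{pair j i | i}`
has a row `pair j (i j)` whose off-diagonal mass inside the block exceeds `δ`, then restricting
to these rows costs each of them more than `δ` of its mass. -/
lemma exists_injective_tsum_offDiag_le_of_le_nsmul {δ : ℝ≥0∞} (hδ : δ ≠ ∞) (N : ℕ)
    {a : ℕ → ℕ → ℝ≥0∞} (ha : ∀ n, ∑' k, a n k ≤ N * δ) :
    ∃ s : ℕ → ℕ, Function.Injective s ∧ ∀ n, ∑' k, (if k = n then 0 else a (s n) (s k)) ≤ δ := by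
  induction N generalizing a with
  | zero =>
    have a_eq_zero : ∀ n k, a n k = 0 := by simpa using ha
    exact ⟨id, Function.injective_id, fun n => by simp [a_eq_zero]⟩
  | succ N ih =>
    by_cases hblock :
        ∃ j, ∀ i, ∑' k, (if k = i then 0 else a (Nat.pair j i) (Nat.pair j k)) ≤ δ
    · obtain ⟨j, hj⟩ := hblock
      exact ⟨Nat.pair j, fun _ _ h => (Nat.pair_eq_pair.1 h).2, hj⟩
    push Not at hblock
    choose i hi using hblock
    set r : ℕ → ℕ := fun j => Nat.pair j (i j)
    have r_injective : Function.Injective r := fun _ _ h => (Nat.pair_eq_pair.1 h).1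
    have sum_rows (n : ℕ) : ∑' k, a (r n) (r k) ≤ N * δ := by
      have block_le (j : ℕ) : a (r n) (r j) + (if j = n then
          ∑' k, (if k = i n then 0 else a (r n) (Nat.pair n k)) else 0) ≤
            ∑' k, a (r n) (Nat.pair j k) := by
        split_ifs with hjn
        · subst hjn
          apply le_of_eq
          convert (ENNReal.tsum_eq_add_tsum_ite (f := fun k => a (r j) (Nat.pair j k)) (i j)).symm
        · simpa using ENNReal.le_tsum (f := fun k => a (r n) (Nat.pair j k)) (i j)
      refine (ENNReal.add_le_add_iff_right hδ).1 ?_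
      calc ∑' k, a (r n) (r k) + δ
          ≤ ∑' k, a (r n) (r k) + ∑' k, (if k = i n then 0 else a (r n) (Nat.pair n k)) := by
            gcongr; exact (hi n).le
        _ = ∑' j, (a (r n) (r j) + (if j = n then
              ∑' k, (if k = i n then 0 else a (r n) (Nat.pair n k)) else 0)) := by
            rw [ENNReal.tsum_add, tsum_ite_eq]
        _ ≤ ∑' j, ∑' k, a (r n) (Nat.pair j k) := ENNReal.tsum_le_tsum block_le
        _ = ∑' k, a (r n) k := by
            rw [← ENNReal.tsum_prod, ← Nat.pairEquiv.tsum_eq]; rfl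
        _ ≤ N * δ + δ := (ha (r n)).trans_eq (by push_cast; ring)
    obtain ⟨s, s_injective, hs⟩ := ih sum_rows
    exact ⟨r ∘ s, r_injective.comp s_injective, hs⟩

/-- Rosenthal's disjointification lemma. -/
theorem exists_injective_tsum_offDiag_le {C δ : ℝ≥0∞} (hC : C ≠ ∞) (hδ : δ ≠ 0)
    {a : ℕ → ℕ → ℝ≥0∞} (ha : ∀ n, ∑' k, a n k ≤ C) :
    ∃ s : ℕ → ℕ, Function.Injective s ∧ ∀ n, ∑' k, (if k = n then 0 else a (s n) (s k)) ≤ δ := by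
  obtain rfl | hδ' := eq_or_ne δ ∞
  · exact ⟨id, Function.injective_id, fun _ => le_top⟩
  obtain ⟨N, hN⟩ := ENNReal.exists_nat_mul_gt hδ hC
  exact exists_injective_tsum_offDiag_le_of_le_nsmul hδ' N fun n => (ha n).trans hN.le

end Rosenthal

section UpperC0Estimate

variable {E F : Type*} [NormedAddCommGroup E] [NormedSpace ℝ E]
  [NormedAddCommGroup F] [NormedSpace ℝ F]

/-- `T` fixes a copy of `c₀`: it is bounded below on an isomorphic copy of `c₀`. Since `T` is
bounded, the lower estimate for `T ∘ e` makes `e` itself an isomorphic embedding. -/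
def FixesC0 (T : E →L[ℝ] F) : Prop :=
  ∃ (e : C₀(ℕ, ℝ) →L[ℝ] E) (c : ℝ), 0 < c ∧ ∀ a, c * ‖a‖ ≤ ‖T (e a)‖

lemma FixesC0.containsC0 {T : E →L[ℝ] F} (hT : FixesC0 T) : ContainsC0 F := by
  obtain ⟨e, c, hc, he⟩ := hT
  exact ⟨T ∘L e, c, hc, he⟩

lemma FixesC0.of_comp {G : Type*} [NormedAddCommGroup G] [NormedSpace ℝ G] {T : F →L[ℝ] G}
    {S : E →L[ℝ] F} (h : FixesC0 (T ∘L S)) : FixesC0 T := by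
  obtain ⟨e, c, hc, he⟩ := h
  exact ⟨S ∘L e, c, hc, he⟩

/-- The sequence `x` has an upper `c₀`-estimate with constant `M`; equivalently, the series
`∑ xₖ` is weakly unconditionally Cauchy. -/
def HasUpperC0Estimate (M : ℝ) (x : ℕ → E) : Prop :=
  ∀ (s : Finset ℕ) (a : ℕ → ℝ) (c : ℝ), 0 ≤ c → (∀ k ∈ s, |a k| ≤ c) →
    ‖∑ k ∈ s, a k • x k‖ ≤ M * c

namespace HasUpperC0Estimate

variable {M : ℝ} {x : ℕ → E}

lemma comp_injective (hx : HasUpperC0Estimate M x) {s : ℕ → ℕ} (hs : Function.Injective s) :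
    HasUpperC0Estimate M (x ∘ s) := by
  intro t a c hc ha
  simpa [hs.extend_apply] using hx (t.map ⟨s, hs⟩) (Function.extend s a 0) c hc
    (by simpa [hs.extend_apply] using ha)

lemma sum_abs_apply_le (hx : HasUpperC0Estimate M x) {φ : StrongDual ℝ E}
    (hφ : ‖φ‖ ≤ 1) (s : Finset ℕ) : ∑ k ∈ s, |φ (x k)| ≤ M := by
  calc ∑ k ∈ s, |φ (x k)|
      = φ (∑ k ∈ s, (SignType.sign (φ (x k)) : ℝ) • x k) := by simp [map_sum, sign_mul_self]
    _ ≤ 1 * ‖∑ k ∈ s, (SignType.sign (φ (x k)) : ℝ) • x k‖ :=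
        (le_abs_self _).trans (φ.le_of_opNorm_le hφ _)
    _ ≤ M := by
        rw [one_mul, ← mul_one M]
        refine hx s _ 1 zero_le_one fun k _ => ?_
        rcases lt_trichotomy (φ (x k)) 0 with h | h | h <;> simp [h]

lemma map (hx : HasUpperC0Estimate M x) (T : E →L[ℝ] F) :
    HasUpperC0Estimate (‖T‖ * M) (T ∘ x) := by
  intro s a c hc ha
  have sum_eq : ∑ k ∈ s, a k • (T ∘ x) k = T (∑ k ∈ s, a k • x k) := by simp [map_sum]
  rw [sum_eq, mul_assoc]
  exact T.le_opNorm_of_le (hx s a c hc ha)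

lemma summable_smul [CompleteSpace E] (hx : HasUpperC0Estimate M x) (a : C₀(ℕ, ℝ)) :
    Summable fun k => a k • x k := by
  rw [summable_iff_vanishing_norm]
  intro η hη
  have a_tendsto : Tendsto a atTop (𝓝 0) := by
    rw [← Nat.cofinite_eq_atTop, ← cocompact_eq_cofinite]
    exact a.zero_at_infty'
  obtain ⟨δ, hδ, hMδ⟩ := exists_pos_mul_lt hη M
  obtain ⟨n, hn⟩ := Metric.tendsto_atTop.1 a_tendsto δ hδ
  refine ⟨Finset.range n, fun t ht => (hx t a δ hδ.le fun k hk => ?_).trans_lt hMδ⟩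
  have n_le : n ≤ k := by simpa using Finset.disjoint_left.1 ht hk
  simpa [Real.dist_eq] using (hn k n_le).le

/-- The operator `c₀ → E` sending the unit vectors to `x`. -/
noncomputable def c0Map [CompleteSpace E] (hx : HasUpperC0Estimate M x) : C₀(ℕ, ℝ) →L[ℝ] E :=
  LinearMap.mkContinuous
    { toFun := fun a => ∑' k, a k • x k
      map_add' := fun a b => by
        simp only [ZeroAtInftyContinuousMap.add_apply, add_smul]
        exact (hx.summable_smul a).tsum_add (hx.summable_smul b)
      map_smul' := fun c a => by
        simp only [ZeroAtInftyContinuousMap.smul_apply, smul_assoc, RingHom.id_apply]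
        exact (hx.summable_smul a).tsum_const_smul c }
    M fun a => le_of_tendsto (hx.summable_smul a).hasSum.norm <| Eventually.of_forall fun s =>
      hx s a ‖a‖ (norm_nonneg _) fun k _ => a.toBCF.norm_coe_le_norm k

lemma hasSum_c0Map [CompleteSpace E] (hx : HasUpperC0Estimate M x) (a : C₀(ℕ, ℝ)) :
    HasSum (fun k => a k • x k) (hx.c0Map a) :=
  (hx.summable_smul a).hasSum

/-- The diagonal terms dominate because the off-diagonal row sums are at most half of them. -/
lemma mul_norm_le_norm_map_c0Map [CompleteSpace E] (hx : HasUpperC0Estimate M x)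
    {T : E →L[ℝ] F} {φ : ℕ → StrongDual ℝ F} (hφ : ∀ n, ‖φ n‖ ≤ 1) {ε : ℝ} (hε : 0 < ε)
    (hdiag : ∀ n, ε ≤ φ n (T (x n)))
    (hoff : ∀ n (s : Finset ℕ), n ∉ s → ∑ k ∈ s, |φ n (T (x k))| ≤ ε / 2) (a : C₀(ℕ, ℝ)) :
    ε / 2 * ‖a‖ ≤ ‖T (hx.c0Map a)‖ := by
  have abs_le_norm (k : ℕ) : |a k| ≤ ‖a‖ := a.toBCF.norm_coe_le_norm k
  have coordinate_le (n : ℕ) : ε * |a n| ≤ ‖T (hx.c0Map a)‖ + ε / 2 * ‖a‖ := by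
    have expansion : HasSum (fun k => a k * φ n (T (x k))) (φ n (T (hx.c0Map a))) := by
      simpa using ((φ n) ∘L T).hasSum (hx.hasSum_c0Map a)
    have tail_le : |φ n (T (hx.c0Map a)) - a n * φ n (T (x n))| ≤ ε / 2 * ‖a‖ := by
      refine le_of_tendsto (hasSum_ite_sub_hasSum expansion n).abs
        (Eventually.of_forall fun s => ?_)
      calc |∑ k ∈ s, if k = n then 0 else a k * φ n (T (x k))|
          = |∑ k ∈ s.erase n, a k * φ n (T (x k))| := by
            rw [Finset.sum_ite, Finset.sum_const_zero, zero_add, Finset.filter_ne']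
        _ ≤ ∑ k ∈ s.erase n, ‖a‖ * |φ n (T (x k))| := by
            refine (Finset.abs_sum_le_sum_abs _ _).trans (Finset.sum_le_sum fun k _ => ?_)
            rw [abs_mul]
            gcongr
            exact abs_le_norm k
        _ ≤ ε / 2 * ‖a‖ := by
            rw [← Finset.mul_sum, mul_comm]
            gcongr
            exact hoff n _ (Finset.notMem_erase n s)
    calc ε * |a n| ≤ |a n * φ n (T (x n))| := by
          rw [abs_mul, mul_comm]
          gcongr
          exact (hdiag n).trans (le_abs_self _)
      _ ≤ |φ n (T (hx.c0Map a))| + ε / 2 * ‖a‖ := by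
          linarith [abs_sub_abs_le_abs_sub (a n * φ n (T (x n))) (φ n (T (hx.c0Map a))),
            abs_sub_comm (a n * φ n (T (x n))) (φ n (T (hx.c0Map a)))]
      _ ≤ ‖T (hx.c0Map a)‖ + ε / 2 * ‖a‖ := by
          gcongr
          simpa using (φ n).le_of_opNorm_le (hφ n) (T (hx.c0Map a))
  have norm_le : ‖a‖ ≤ (‖T (hx.c0Map a)‖ + ε / 2 * ‖a‖) / ε := by
    rw [← ZeroAtInftyContinuousMap.norm_toBCF_eq_norm,
      BoundedContinuousFunction.norm_le (by positivity)]
    intro n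
    rw [le_div_iff₀' hε]
    exact coordinate_le n
  rw [le_div_iff₀' hε] at norm_le
  linarith

/-- The Bessaga–Pełczyński principle, for an operator. -/
theorem fixesC0 [CompleteSpace E] (hx : HasUpperC0Estimate M x) {T : E →L[ℝ] F} {ε : ℝ}
    (hε : 0 < ε) (hT : ∀ k, ε ≤ ‖T (x k)‖) : FixesC0 T := by
  choose φ hφ φ_norming using fun k => exists_dual_vector'' ℝ (T (x k))
  have rows_bounded (n : ℕ) :
      ∑' k, ENNReal.ofReal |φ n (T (x k))| ≤ ENNReal.ofReal (‖T‖ * M) := by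
    refine ENNReal.tsum_le_of_sum_range_le fun m => ?_
    rw [← ENNReal.ofReal_sum_of_nonneg fun _ _ => abs_nonneg _]
    exact ENNReal.ofReal_le_ofReal ((hx.map T).sum_abs_apply_le (hφ n) _)
  obtain ⟨s, s_injective, hs⟩ := exists_injective_tsum_offDiag_le ENNReal.ofReal_ne_top
    (δ := ENNReal.ofReal (ε / 2)) (by simpa using hε) rows_bounded
  have off_diagonal (n : ℕ) (t : Finset ℕ) (hn : n ∉ t) :
      ∑ k ∈ t, |φ (s n) (T (x (s k)))| ≤ ε / 2 := by
    rw [← ENNReal.ofReal_le_ofReal_iff (by positivity),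
      ENNReal.ofReal_sum_of_nonneg fun _ _ => abs_nonneg _]
    refine le_trans (le_of_eq ?_) ((ENNReal.sum_le_tsum t).trans (hs n))
    exact Finset.sum_congr rfl fun k hk => by rw [if_neg (ne_of_mem_of_not_mem hk hn)]
  refine ⟨(hx.comp_injective s_injective).c0Map, ε / 2, half_pos hε, ?_⟩
  exact mul_norm_le_norm_map_c0Map _ (fun n => hφ (s n)) hε
    (fun n => (hT (s n)).trans_eq (φ_norming (s n)).symm) off_diagonal

end HasUpperC0Estimate

end UpperC0Estimate

section Submeasure

variable {α : Type*} [BooleanAlgebra α]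

/-- A finite submeasure on a Boolean algebra. -/
structure IsSubmeasure (φ : α → ℝ) : Prop where
  map_bot : φ ⊥ = 0
  mono : Monotone φ
  map_sup_le : ∀ a b, φ (a ⊔ b) ≤ φ a + φ b

/-- `φ` tends to `0` along disjoint sequences. A single small value per sequence is enough, because
every subsequence of a disjoint sequence is again disjoint. -/
def IsExhaustive (φ : α → ℝ) : Prop :=
  ∀ A : ℕ → α, Pairwise (Function.onFun Disjoint A) → ∀ η > 0, ∃ n, φ (A n) ≤ η

lemma IsSubmeasure.nonneg {φ : α → ℝ} (hφ : IsSubmeasure φ) (a : α) : 0 ≤ φ a :=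
  hφ.map_bot.ge.trans (hφ.mono bot_le)

lemma IsSubmeasure.map_finset_sup_le {φ : α → ℝ} (hφ : IsSubmeasure φ) {ι : Type*} (s : Finset ι)
    (A : ι → α) : φ (s.sup A) ≤ ∑ i ∈ s, φ (A i) := by
  classical
  induction s using Finset.induction_on with
  | empty => simp [hφ.map_bot]
  | insert i s hi ih =>
    rw [Finset.sup_insert, Finset.sum_insert hi]
    exact (hφ.map_sup_le _ _).trans (by gcongr)

namespace IsExhaustive

variable {φ : α → ℝ}

lemma exists_forall_map_sdiff_le (hφ : IsExhaustive φ) {A : ℕ → α} (hA : Monotone A) {η : ℝ}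
    (hη : 0 < η) : ∃ p, ∀ q ≥ p, φ (A q \ A p) ≤ η := by
  by_contra! h
  choose next le_next lt_map_sdiff using h
  have iterate_mono : Monotone fun j => next^[j] 0 := monotone_nat_of_le_succ fun j => by
    rw [Function.iterate_succ_apply']
    exact le_next _
  obtain ⟨j, hj⟩ := hφ (fun j => A (next^[j + 1] 0) \ A (next^[j] 0))
    ((pairwise_disjoint_on _).2 fun i j hij => disjoint_sdiff_self_right.mono_left
      (sdiff_le.trans (hA (iterate_mono hij)))) η hη
  rw [Function.iterate_succ_apply'] at hj
  exact (lt_map_sdiff _).not_ge hj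

/-- The `G n` stand in for the set `⋂ₙ ⋃ₖ≥ₙ A k`, which a general Boolean algebra does not have. -/
lemma exists_antitone_map_sdiff_le (hφ : IsSubmeasure φ) (hφ' : IsExhaustive φ) (A : ℕ → α) {η : ℝ}
    (hη : 0 < η) : ∃ G : ℕ → α, Antitone G ∧ (∀ n, φ (A n \ G n) ≤ η) ∧
      ∀ n, ∃ q, G (n + 1) ≤ (Finset.Ico n q).sup A := by
  obtain ⟨θ, θ_pos, c, θ_sum, c_le⟩ := posSumOfEncodable hη ℕ
  let C (n q : ℕ) : α := (Finset.Ico n q).sup A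
  have C_mono (n : ℕ) : Monotone (C n) := fun _ _ h =>
    Finset.sup_mono (Finset.Ico_subset_Ico_right h)
  choose p hp using fun n => hφ'.exists_forall_map_sdiff_le (C_mono n) (θ_pos n)
  refine ⟨fun n => (Finset.range n).inf fun j => C j (p j),
    fun _ _ h => Finset.inf_mono (Finset.range_subset_range.2 h), fun n => ?_,
    fun n => ⟨p n, Finset.inf_le (f := fun j => C j (p j)) (Finset.self_mem_range_succ n)⟩⟩
  have A_le (j : ℕ) (hj : j ≤ n) : A n ≤ C j (max (n + 1) (p j)) :=
    Finset.le_sup (f := A) (by simp; omega)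
  calc φ (A n \ (Finset.range n).inf fun j => C j (p j))
      = φ ((Finset.range n).sup fun j => A n \ C j (p j)) := by rw [Finset.sup_sdiff_left]
    _ ≤ ∑ j ∈ Finset.range n, φ (A n \ C j (p j)) := hφ.map_finset_sup_le _ _
    _ ≤ ∑ j ∈ Finset.range n, θ j := Finset.sum_le_sum fun j hj =>
        (hφ.mono (sdiff_le_sdiff_right (A_le j (Finset.mem_range.1 hj).le))).trans
          (hp j _ (le_max_right _ _))
    _ ≤ η := (sum_le_hasSum _ (fun j _ => (θ_pos j).le) θ_sum).trans c_le

lemma exists_map_le_of_summable (hφ : IsSubmeasure φ) (hφ' : IsExhaustive φ) {lam : ℕ → α → ℝ}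
    (hlam : ∀ n, IsSubmeasure (lam n)) (lam_le : ∀ n a, lam n a ≤ φ a) {A : ℕ → α} {w : ℕ → ℝ}
    (hw : Summable w) (hA : ∀ n k, n < k → lam n (A k) ≤ w k) {e : ℝ} (he : 0 < e) :
    ∃ n, lam n (A n) ≤ e := by
  have third_pos : 0 < e / 3 := by positivity
  obtain ⟨G, G_anti, A_sdiff_G, hG⟩ := exists_antitone_map_sdiff_le hφ hφ' A third_pos
  choose q G_le using hG
  obtain ⟨s, hs⟩ := summable_iff_vanishing_norm.1 hw (e / 3) third_pos
  obtain ⟨m, hm⟩ := s.exists_nat_subset_range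
  have map_G_le (n : ℕ) (hn : m ≤ n) : lam n (G (n + 2)) ≤ e / 3 := by
    calc lam n (G (n + 2))
        ≤ lam n ((Finset.Ico (n + 1) (q (n + 1))).sup A) := (hlam n).mono (G_le (n + 1))
      _ ≤ ∑ k ∈ Finset.Ico (n + 1) (q (n + 1)), lam n (A k) := (hlam n).map_finset_sup_le _ _
      _ ≤ ∑ k ∈ Finset.Ico (n + 1) (q (n + 1)), w k :=
          Finset.sum_le_sum fun k hk => hA n k (Finset.mem_Ico.1 hk).1
      _ ≤ e / 3 := by
          refine (le_abs_self _).trans (hs _ (Finset.disjoint_left.2 fun k hk hks => ?_)).le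
          have := Finset.mem_range.1 (hm hks)
          have := (Finset.mem_Ico.1 hk).1
          omega
  have G_compl_mono : Monotone fun n => (G (m + n))ᶜ := fun _ _ h =>
    compl_le_compl (G_anti (Nat.add_le_add_left h m))
  obtain ⟨r, hr⟩ := hφ'.exists_forall_map_sdiff_le G_compl_mono third_pos
  set N := m + r
  have map_sdiff_le : φ (G N \ G (N + 2)) ≤ e / 3 := by
    rw [← compl_sdiff_compl]
    exact hr (r + 2) (Nat.le_add_right r 2)
  have A_le : A N ≤ A N \ G N ⊔ (G N \ G (N + 2) ⊔ G (N + 2)) := by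
    rw [sdiff_sup_self, ← sup_assoc, sdiff_sup_self]
    exact le_sup_of_le_left le_sup_left
  refine ⟨N, ?_⟩
  calc lam N (A N) ≤ lam N (A N \ G N) + (lam N (G N \ G (N + 2)) + lam N (G (N + 2))) :=
        ((hlam N).mono A_le).trans (((hlam N).map_sup_le _ _).trans
          (add_le_add_right ((hlam N).map_sup_le _ _) _))
    _ ≤ e / 3 + (e / 3 + e / 3) := by
        gcongr
        exacts [(lam_le _ _).trans (A_sdiff_G N), (lam_le _ _).trans map_sdiff_le,
          map_G_le N (Nat.le_add_right m r)]
    _ = e := by ring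

theorem exists_finset_forall_lt_imp_le (hφ : IsSubmeasure φ) (hφ' : IsExhaustive φ) {ι : Type*}
    {lam : ι → α → ℝ} (hlam : ∀ i, IsSubmeasure (lam i)) (lam_le : ∀ i a, lam i a ≤ φ a)
    (le_lam : ∀ a, ∃ i, φ a ≤ lam i a) {e : ℝ} (he : 0 < e) :
    ∃ (F : Finset ι) (δ : ℝ), 0 < δ ∧ ∀ a, (∀ i ∈ F, lam i a < δ) → φ a ≤ e := by
  classical
  by_contra! h
  choose A A_lt lt_A using fun (F : Finset ι) (n : ℕ) => h F ((1 / 2) ^ n) (by positivity)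
  choose i le_lam using le_lam
  let F (n : ℕ) : Finset ι := n.rec ∅ fun n F => insert (i (A F n)) F
  have F_mono : Monotone F := monotone_nat_of_le_succ fun n => Finset.subset_insert _ _
  obtain ⟨n, hn⟩ := exists_map_le_of_summable hφ hφ' (lam := fun n => lam (i (A (F n) n)))
    (A := fun n => A (F n) n) (fun n => hlam _) (fun n => lam_le _) summable_geometric_two
    (fun n k hnk => (A_lt (F k) k _ (F_mono hnk (Finset.mem_insert_self _ _))).le) he
  exact (((lt_A _ n).trans_le (le_lam _)).trans_le hn).false

end IsExhaustive

end Submeasure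

section WeakCompactness

/-- By the parallelogram law, near-minimizers of a quadratic form on a convex set are close. -/
lemma frequently_frequently_bilinForm_sub_le {E : Type*} [AddCommGroup E] [Module ℝ E]
    {B : LinearMap.BilinForm ℝ E} (hB : ∀ f, 0 ≤ B f f) {L : Filter E} [L.NeBot] {ι : Type*}
    {p : ι → Prop} {C : ι → Set E} (hL : L.HasBasis p C) (hC : ∀ i, p i → Convex ℝ (C i)) {M : ℝ}
    (hM : ∀ᶠ f in L, B f f ≤ M) {δ : ℝ} (hδ : 0 < δ) :
    ∃ᶠ f in L, ∃ᶠ g in L, B (g - f) (g - f) ≤ δ := by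
  have bounded_below : L.IsBoundedUnder (· ≥ ·) fun f => B f f :=
    isBoundedUnder_of ⟨0, fun f => hB f⟩
  have bounded_above : L.IsBoundedUnder (· ≤ ·) fun f => B f f := ⟨M, by simpa using hM⟩
  set r := liminf (fun f => B f f) L
  have lt_eventually : ∀ᶠ f in L, r - δ / 8 < B f f :=
    eventually_lt_of_lt_liminf (by linarith) bounded_below
  have lt_frequently : ∃ᶠ f in L, B f f < r + δ / 8 :=
    frequently_lt_of_liminf_lt bounded_above.isCoboundedUnder_ge (by linarith)
  obtain ⟨i, hi, lt_on_C⟩ := hL.eventually_iff.1 lt_eventually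
  have near_min := lt_frequently.and_eventually (hL.mem_of_mem hi)
  refine near_min.mono fun f hf => near_min.mono fun g hg => ?_
  have midpoint_mem : (1 / 2 : ℝ) • g + (1 / 2 : ℝ) • f ∈ C i :=
    hC i hi hg.2 hf.2 (by norm_num) (by norm_num) (by norm_num)
  have midpoint_lt := lt_on_C midpoint_mem
  simp only [map_add, map_sub, map_smul, LinearMap.add_apply, LinearMap.sub_apply,
    LinearMap.smul_apply, smul_eq_mul] at midpoint_lt ⊢
  linarith [hf.1, hg.1]

variable {E X : Type*} [NormedAddCommGroup E] [NormedSpace ℝ E]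
  [NormedAddCommGroup X] [NormedSpace ℝ X]

/-- `S` is dominated by Hilbertian seminorms up to arbitrarily small multiples of the norm. -/
def IsAlmostHilbertian (S : E →L[ℝ] X) : Prop :=
  ∀ ε > 0, ∃ (B : LinearMap.BilinForm ℝ E) (M : ℝ), (∀ f, 0 ≤ B f f) ∧
    (∀ f, ‖f‖ ≤ 1 → B f f ≤ M) ∧ ∀ f, ‖S f‖ ≤ √(B f f) + ε * ‖f‖

namespace IsAlmostHilbertian

variable {S : E →L[ℝ] X}

lemma exists_dist_le (hS : IsAlmostHilbertian S) {ξ : WeakDual ℝ (StrongDual ℝ X)}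
    (hξ : ξ ∈ closure ((fun f => NormedSpace.inclusionInDoubleDualWeak ℝ X
      (toWeakSpaceCLM ℝ X (S f))) '' Metric.closedBall 0 1)) {ε : ℝ} (hε : 0 < ε) :
    ∃ f, dist (WeakDual.toStrongDual ξ) (NormedSpace.inclusionInDoubleDual ℝ X (S f)) ≤ ε := by
  obtain ⟨B, M, B_nonneg, B_le, S_le⟩ := hS (ε / 4) (by positivity)
  let J : E →ₗ[ℝ] WeakDual ℝ (StrongDual ℝ X) :=
    (NormedSpace.inclusionInDoubleDualWeak ℝ X ∘L toWeakSpaceCLM ℝ X ∘L S).toLinearMap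
  let L : Filter E := comap J (𝓝 ξ) ⊓ 𝓟 (Metric.closedBall 0 1)
  have : LocallyConvexSpace ℝ (WeakDual ℝ (StrongDual ℝ X)) :=
    .induced (LinearMap.ltoFun ℝ (StrongDual ℝ X) ℝ ℝ ∘ₗ ContinuousLinearMap.coeLM ℝ)
  have : L.NeBot := by
    refine frequently_mem_iff_neBot.1 (frequently_comap.2 ?_)
    exact (mem_closure_iff_frequently.1 hξ).mono fun _ ⟨f, hf, hfJ⟩ => ⟨f, hfJ, hf⟩
  have mem_ball : ∀ᶠ f in L, ‖f‖ ≤ 1 := by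
    filter_upwards [mem_inf_of_right (mem_principal_self _)] with f hf
    simpa using hf
  have L_basis := ((LocallyConvexSpace.convex_basis (𝕜 := ℝ) ξ).comap J).inf_principal
    (Metric.closedBall 0 1)
  obtain ⟨f, hf, norm_f⟩ := ((frequently_frequently_bilinForm_sub_le B_nonneg L_basis
    (fun s hs => (hs.2.is_linear_preimage J.isLinear).inter (convex_closedBall 0 1))
    (mem_ball.mono B_le) (show 0 < (ε / 2) ^ 2 by positivity)).and_eventually mem_ball).exists
  refine ⟨f, ?_⟩
  have J_tendsto : Tendsto J L (𝓝 ξ) := tendsto_comap.mono_left inf_le_left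
  have J_frequently : ∃ᶠ g in L, J g ∈ WeakDual.toStrongDual ⁻¹' Metric.closedBall
      (NormedSpace.inclusionInDoubleDual ℝ X (S f)) ε := by
    refine (hf.and_eventually mem_ball).mono fun g ⟨hg, norm_g⟩ => ?_
    change dist (NormedSpace.inclusionInDoubleDual ℝ X (S g)) _ ≤ ε
    refine (dist_eq_norm (NormedSpace.inclusionInDoubleDual ℝ X (S g)) _).trans_le ?_
    rw [← map_sub, ← map_sub]
    refine (NormedSpace.double_dual_bound ℝ X _).trans ?_
    calc ‖S (g - f)‖ ≤ √(B (g - f) (g - f)) + ε / 4 * ‖g - f‖ := S_le _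
      _ ≤ ε / 2 + ε / 4 * (1 + 1) := by
          gcongr
          · exact Real.sqrt_le_iff.2 ⟨by positivity, hg⟩
          · exact norm_sub_le_of_le norm_g norm_f
      _ = ε := by ring
  exact (WeakDual.isClosed_closedBall _ ε).mem_of_frequently_of_tendsto J_frequently J_tendsto

theorem weaklyCompactOperator [CompleteSpace X] (hS : IsAlmostHilbertian S) :
    WeaklyCompactOperator S := by
  refine NormedSpace.isCompact_closure_of_isBounded ℝ X _ ?_ fun ξ hξ => ?_
  · refine (Metric.isBounded_closedBall (x := (0 : X)) (r := ‖S‖)).subset ?_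
    rintro _ ⟨f, hf, rfl⟩
    have norm_S_le := S.le_of_opNorm_le_of_le le_rfl (mem_closedBall_zero_iff.1 hf)
    rw [mul_one] at norm_S_le
    exact mem_closedBall_zero_iff.2 norm_S_le
  · rw [← image_comp] at hξ
    have range_closed : IsClosed (range (NormedSpace.inclusionInDoubleDualLi (E := X) ℝ)) :=
      (NormedSpace.inclusionInDoubleDualLi (E := X) ℝ)
        |>.isometry.isUniformInducing.isComplete_range.isClosed
    have mem_range : WeakDual.toStrongDual ξ ∈
        range (NormedSpace.inclusionInDoubleDualLi (E := X) ℝ) := by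
      rw [← range_closed.closure_eq]
      refine (Metric.mem_closure_range_iff (α := StrongDual ℝ (StrongDual ℝ X))).2 fun ε hε => ?_
      obtain ⟨f, hf⟩ := hS.exists_dist_le hξ (half_pos hε)
      exact ⟨S f, hf.trans_lt (half_lt_self hε)⟩
    obtain ⟨y, hy⟩ := mem_range
    exact ⟨toWeakSpace ℝ X y, hy⟩

end IsAlmostHilbertian

end WeakCompactness

lemma exists_basis_map_sum_smul_eq_sum_sq {V : Type*} [AddCommGroup V] [Module ℝ V]
    [FiniteDimensional ℝ V] {Q : QuadraticForm ℝ V} (hQ : Q.PosDef) :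
    ∃ v : Module.Basis (Fin (Module.finrank ℝ V)) ℝ V,
      ∀ a : Fin (Module.finrank ℝ V) → ℝ, Q (∑ i, a i • v i) = ∑ i, a i ^ 2 := by
  obtain ⟨w, hw, ⟨e⟩⟩ := QuadraticForm.equivalent_one_zero_neg_one_weighted_sum_squared Q
  have Q_symm (a) : Q (e.symm a) = ∑ i, w i * a i ^ 2 :=
    (e.symm.map_app a).trans (by simp [pow_two])
  have w_eq_one (i) : w i = 1 := by
    have w_pos : 0 < w i := by
      simpa [Q_symm, Pi.single_apply] using hQ (e.symm (Pi.single i 1)) (by simp)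
    grind
  let v : Module.Basis (Fin (Module.finrank ℝ V)) ℝ V := .ofEquivFun e.toLinearEquiv
  refine ⟨v, fun a => ?_⟩
  rw [← v.equivFun_symm_apply]
  exact (Q_symm a).trans (by simp [w_eq_one])

/-- The bounded measurable functions, as a subalgebra of `ℓ^∞(Ω)`. -/
def boundedMeasurableSubalgebra (Ω : Type*) [MeasurableSpace Ω] :
    Subalgebra ℝ (lp (fun _ : Ω => ℝ) ∞) where
  carrier := {f | Measurable f}
  add_mem' hf hg := hf.add hg
  mul_mem' hf hg := hf.mul hg
  algebraMap_mem' _ := measurable_const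

lemma isClosed_boundedMeasurableSubalgebra (Ω : Type*) [MeasurableSpace Ω] :
    IsClosed (boundedMeasurableSubalgebra Ω : Set (lp (fun _ : Ω => ℝ) ∞)) := by
  refine IsSeqClosed.isClosed fun u f hu huf => ?_
  refine measurable_of_tendsto_metrizable hu (tendsto_pi_nhds.2 fun x => ?_)
  refine tendsto_iff_norm_sub_tendsto_zero.2 (squeeze_zero (fun _ => norm_nonneg _) (fun n => ?_)
    (tendsto_iff_norm_sub_tendsto_zero.1 huf))
  exact lp.norm_apply_le_norm ENNReal.top_ne_zero (u n - f) x

/-- The Banach algebra of bounded measurable real functions, with the supremum norm. -/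
def BoundedMeasurable (Ω : Type*) [MeasurableSpace Ω] : Type _ := boundedMeasurableSubalgebra Ω

namespace BoundedMeasurable

variable {Ω : Type*} [MeasurableSpace Ω]

noncomputable instance : NormedCommRing (BoundedMeasurable Ω) :=
  inferInstanceAs (NormedCommRing (boundedMeasurableSubalgebra Ω))

noncomputable instance : NormedAlgebra ℝ (BoundedMeasurable Ω) :=
  inferInstanceAs (NormedAlgebra ℝ (boundedMeasurableSubalgebra Ω))

instance : FunLike (BoundedMeasurable Ω) Ω ℝ where
  coe f := f.1
  coe_injective _ _ h := Subtype.ext (lp.ext h)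

protected lemma measurable (f : BoundedMeasurable Ω) : Measurable f := f.2

@[simp] lemma zero_apply (x : Ω) : (0 : BoundedMeasurable Ω) x = 0 := rfl

@[simp] lemma one_apply (x : Ω) : (1 : BoundedMeasurable Ω) x = 1 := rfl

@[simp] lemma add_apply (f g : BoundedMeasurable Ω) (x : Ω) : (f + g) x = f x + g x := rfl

@[simp] lemma sub_apply (f g : BoundedMeasurable Ω) (x : Ω) : (f - g) x = f x - g x := rfl

@[simp] lemma mul_apply (f g : BoundedMeasurable Ω) (x : Ω) : (f * g) x = f x * g x := rfl

@[simp] lemma smul_apply (c : ℝ) (f : BoundedMeasurable Ω) (x : Ω) : (c • f) x = c * f x := rfl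

/-- Evaluation at a point, as a linear functional. -/
def eval (x : Ω) : BoundedMeasurable Ω →ₗ[ℝ] ℝ where
  toFun f := f x
  map_add' _ _ := rfl
  map_smul' _ _ := rfl

@[simp] lemma sum_apply {ι : Type*} (s : Finset ι) (f : ι → BoundedMeasurable Ω) (x : Ω) :
    (∑ i ∈ s, f i) x = ∑ i ∈ s, f i x :=
  map_sum (eval x) f s

lemma abs_apply_le_norm (f : BoundedMeasurable Ω) (x : Ω) : |f x| ≤ ‖f‖ :=
  lp.norm_apply_le_norm ENNReal.top_ne_zero f.1 x

lemma norm_le_of_forall_abs_le {f : BoundedMeasurable Ω} {c : ℝ} (hc : 0 ≤ c)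
    (hf : ∀ x, |f x| ≤ c) : ‖f‖ ≤ c :=
  lp.norm_le_of_forall_le hc hf

/-- A bounded measurable function, bundled. -/
def ofBound {f : Ω → ℝ} (hf : Measurable f) {c : ℝ} (hc : ∀ x, |f x| ≤ c) : BoundedMeasurable Ω :=
  ⟨⟨f, memℓp_infty ⟨c, by rintro _ ⟨x, rfl⟩; exact hc x⟩⟩, hf⟩

@[simp] lemma ofBound_apply {f : Ω → ℝ} (hf : Measurable f) {c : ℝ} (hc : ∀ x, |f x| ≤ c) (x : Ω) :
    ofBound hf hc x = f x := rfl

instance : CompleteSpace (BoundedMeasurable Ω) :=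
  (isClosed_boundedMeasurableSubalgebra Ω).completeSpace_coe

/-- The indicator function of a measurable set, as a bounded measurable function. -/
noncomputable def indicatorOne (A : {A : Set Ω // MeasurableSet A}) : BoundedMeasurable Ω :=
  ofBound (f := A.1.indicator 1) (measurable_one.indicator A.2) (c := 1) fun x => by
    by_cases hx : x ∈ A.1 <;> simp [hx]

@[simp] lemma indicatorOne_apply (A : {A : Set Ω // MeasurableSet A}) (x : Ω) :
    indicatorOne A x = A.1.indicator 1 x := rfl

lemma norm_indicatorOne_mul_le (A : {A : Set Ω // MeasurableSet A}) (f : BoundedMeasurable Ω) :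
    ‖indicatorOne A * f‖ ≤ ‖f‖ :=
  norm_le_of_forall_abs_le (norm_nonneg f) fun x => by
    by_cases hx : x ∈ A.1 <;> simp [hx, abs_apply_le_norm f x]

section Semivariation

variable {X : Type*} [NormedAddCommGroup X] [NormedSpace ℝ X] {S : BoundedMeasurable Ω →L[ℝ] X}
  {A : {A : Set Ω // MeasurableSet A}}

/-- The semivariation of the vector measure `A ↦ S 1_A`: the norm of `S` on the functions supported
by `A`. -/
noncomputable def semivariation (S : BoundedMeasurable Ω →L[ℝ] X)
    (A : {A : Set Ω // MeasurableSet A}) : ℝ :=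
  ‖S ∘L ContinuousLinearMap.mul ℝ (BoundedMeasurable Ω) (indicatorOne A)‖

lemma semivariation_nonneg (S : BoundedMeasurable Ω →L[ℝ] X)
    (A : {A : Set Ω // MeasurableSet A}) : 0 ≤ semivariation S A :=
  norm_nonneg _

lemma semivariation_le {c : ℝ} (hc : 0 ≤ c) (h : ∀ f, ‖S (indicatorOne A * f)‖ ≤ c * ‖f‖) :
    semivariation S A ≤ c :=
  ContinuousLinearMap.opNorm_le_bound _ hc h

lemma norm_map_indicatorOne_mul_le (S : BoundedMeasurable Ω →L[ℝ] X)
    (A : {A : Set Ω // MeasurableSet A}) (f : BoundedMeasurable Ω) :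
    ‖S (indicatorOne A * f)‖ ≤ semivariation S A * ‖f‖ :=
  (S ∘L ContinuousLinearMap.mul ℝ (BoundedMeasurable Ω) (indicatorOne A)).le_opNorm f

lemma norm_map_le_semivariation_mul {f : BoundedMeasurable Ω} (hf : ∀ x ∉ A.1, f x = 0) :
    ‖S f‖ ≤ semivariation S A * ‖f‖ := by
  have f_eq : f = indicatorOne A * f := DFunLike.ext _ _ fun x => by
    by_cases hx : x ∈ A.1 <;> simp [hx, hf]
  calc ‖S f‖ = ‖S (indicatorOne A * f)‖ := by rw [← f_eq]
    _ ≤ semivariation S A * ‖f‖ := norm_map_indicatorOne_mul_le S A f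

lemma isSubmeasure_semivariation (S : BoundedMeasurable Ω →L[ℝ] X) :
    IsSubmeasure (semivariation S) where
  map_bot := by
    have indicatorOne_bot : indicatorOne (⊥ : {A : Set Ω // MeasurableSet A}) = 0 :=
      DFunLike.ext _ _ fun x => by simp
    simp [semivariation, indicatorOne_bot]
  mono A B hAB := semivariation_le (norm_nonneg _) fun f => by
    refine (norm_map_le_semivariation_mul fun x hx => ?_).trans
      (mul_le_mul_of_nonneg_left (norm_indicatorOne_mul_le A f) (norm_nonneg _))
    simp [show x ∉ A.1 from fun h => hx (hAB h)]
  map_sup_le A B := by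
    refine semivariation_le (add_nonneg (semivariation_nonneg S A) (semivariation_nonneg S B))
      fun f => ?_
    have split : indicatorOne (A ⊔ B) * f = indicatorOne A * f + indicatorOne (B \ A) * f :=
      DFunLike.ext _ _ fun x => by
        by_cases hA : x ∈ A.1 <;> by_cases hB : x ∈ B.1 <;> simp [hA, hB]
    rw [split, map_add, add_mul]
    refine norm_add_le_of_le (norm_map_indicatorOne_mul_le S A f) ?_
    refine (norm_map_le_semivariation_mul (A := B) fun x hx => ?_).trans
      (mul_le_mul_of_nonneg_left (norm_indicatorOne_mul_le _ f) (semivariation_nonneg S B))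
    simp [hx]

lemma hasUpperC0Estimate_of_disjoint {A : ℕ → {A : Set Ω // MeasurableSet A}}
    (hA : Pairwise (Function.onFun Disjoint A)) {f : ℕ → BoundedMeasurable Ω}
    (hf : ∀ k, ‖f k‖ ≤ 1) : HasUpperC0Estimate 1 fun k => indicatorOne (A k) * f k := by
  intro s a c hc ha
  rw [one_mul]
  refine norm_le_of_forall_abs_le hc fun x => ?_
  by_cases hx : ∃ n ∈ s, x ∈ (A n).1
  · obtain ⟨n, hn, hxn⟩ := hx
    have notMem (k : ℕ) (hk : k ≠ n) : x ∉ (A k).1 := fun hxk =>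
      (Set.disjoint_left.1 (disjoint_iff.2 (congrArg Subtype.val (hA hk).eq_bot))) hxk hxn
    rw [sum_apply, Finset.sum_eq_single_of_mem n hn fun k _ hk => by simp [notMem k hk]]
    simpa [hxn, abs_mul] using
      mul_le_mul (ha n hn) ((abs_apply_le_norm _ x).trans (hf n)) (abs_nonneg _) hc
  · push Not at hx
    rw [sum_apply, Finset.sum_eq_zero fun k hk => by simp [hx k hk]]
    simpa using hc

lemma isExhaustive_semivariation (hS : ¬ FixesC0 S) : IsExhaustive (semivariation S) := by
  intro A hA η hη
  by_contra! h
  choose f norm_f_lt lt_norm_map using fun n =>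
    ContinuousLinearMap.exists_lt_apply_of_lt_opNorm
      (S ∘L ContinuousLinearMap.mul ℝ (BoundedMeasurable Ω) (indicatorOne (A n))) (h n)
  exact hS ((hasUpperC0Estimate_of_disjoint hA fun n => (norm_f_lt n).le).fixesC0 hη
    fun n => (lt_norm_map n).le)

end Semivariation

section PositiveFunctional

/-- Positivity of a functional with respect to the pointwise order. By the Riesz representation
theorem, such functionals are the integrals against finitely additive measures. -/
def IsPositive (l : BoundedMeasurable Ω →L[ℝ] ℝ) : Prop :=
  ∀ f : BoundedMeasurable Ω, (∀ x, 0 ≤ f x) → 0 ≤ l f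

variable {l : BoundedMeasurable Ω →L[ℝ] ℝ}

lemma IsPositive.mono (hl : IsPositive l) {f g : BoundedMeasurable Ω} (hfg : ∀ x, f x ≤ g x) :
    l f ≤ l g := by
  simpa using hl (g - f) fun x => sub_nonneg.2 (hfg x)

lemma IsPositive.isSubmeasure (hl : IsPositive l) :
    IsSubmeasure fun A => l (indicatorOne A) where
  map_bot := by
    rw [← map_zero l]
    exact congrArg l (DFunLike.ext _ _ fun x => by simp)
  mono A B hAB := hl.mono fun x => Set.indicator_le_indicator_of_subset hAB (by simp) x
  map_sup_le A B := by
    rw [← map_add]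
    refine hl.mono fun x => ?_
    by_cases hA : x ∈ A.1 <;> by_cases hB : x ∈ B.1 <;> simp [hA, hB]

lemma IsPositive.sq_mul_apply_indicatorOne_le (hl : IsPositive l)
    {A : {A : Set Ω // MeasurableSet A}} {f : BoundedMeasurable Ω} {c : ℝ} (hc : 0 ≤ c)
    (hf : ∀ x ∈ A.1, c ≤ |f x|) : c ^ 2 * l (indicatorOne A) ≤ l (f * f) := by
  rw [← smul_eq_mul, ← map_smul]
  refine hl.mono fun x => ?_
  by_cases hx : x ∈ A.1
  · simpa [hx, pow_two] using mul_le_mul (hf x hx) (hf x hx) hc (abs_nonneg _)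
  · simp [hx, mul_self_nonneg]

lemma IsPositive.smul (hl : IsPositive l) {c : ℝ} (hc : 0 ≤ c) : IsPositive (c • l) :=
  fun f hf => mul_nonneg hc (hl f hf)

lemma IsPositive.sum {ι : Type*} {s : Finset ι} {l : ι → BoundedMeasurable Ω →L[ℝ] ℝ}
    (hl : ∀ i, IsPositive (l i)) : IsPositive (∑ i ∈ s, l i) := fun f hf => by
  simpa using Finset.sum_nonneg fun i _ => hl i f hf

lemma isPositive_of_forall_abs_le (hl : ∀ f, |l f| ≤ l 1 * ‖f‖) : IsPositive l := by
  intro f hf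
  have norm_sub_le : ‖‖f‖ • 1 - f‖ ≤ ‖f‖ := norm_le_of_forall_abs_le (norm_nonneg f) fun x => by
    have := (le_abs_self _).trans (abs_apply_le_norm f x)
    rw [abs_le]
    constructor <;> simp <;> linarith [hf x]
  have l_one_nonneg : 0 ≤ l 1 := by
    by_contra! h
    have := (abs_pos_of_neg h).trans_le (hl 1)
    exact (mul_nonpos_of_nonpos_of_nonneg h.le (norm_nonneg _)).not_gt this
  have l_sub_le : l (‖f‖ • 1 - f) ≤ l 1 * ‖f‖ :=
    (le_abs_self _).trans ((hl _).trans (mul_le_mul_of_nonneg_left norm_sub_le l_one_nonneg))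
  rw [map_sub, map_smul, smul_eq_mul] at l_sub_le
  linarith

/-- A norming functional on the space of operators, rather than on `X`, produces a positive
functional directly. -/
lemma exists_isPositive_apply_indicatorOne_eq {X : Type*} [NormedAddCommGroup X] [NormedSpace ℝ X]
    (S : BoundedMeasurable Ω →L[ℝ] X) (A : {A : Set Ω // MeasurableSet A}) :
    ∃ l : BoundedMeasurable Ω →L[ℝ] ℝ, IsPositive l ∧
      (∀ B, l (indicatorOne B) ≤ semivariation S B) ∧ l (indicatorOne A) = semivariation S A := by
  let U : BoundedMeasurable Ω →L[ℝ] BoundedMeasurable Ω →L[ℝ] X :=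
    ContinuousLinearMap.compL ℝ _ _ _ S ∘L ContinuousLinearMap.mul ℝ _ ∘L
      ContinuousLinearMap.mul ℝ _ (indicatorOne A)
  have U_apply (f g) : U f g = S (indicatorOne A * f * g) := rfl
  obtain ⟨Λ, Λ_norm_le, hΛ⟩ := exists_dual_vector'' ℝ (U (indicatorOne A))
  have U_indicatorOne : U (indicatorOne A) =
      S ∘L ContinuousLinearMap.mul ℝ (BoundedMeasurable Ω) (indicatorOne A) := by
    refine ContinuousLinearMap.ext fun g => congrArg S (DFunLike.ext _ _ fun x => ?_)
    by_cases hx : x ∈ A.1 <;> simp [hx]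
  have U_one : U 1 = U (indicatorOne A) := by
    rw [U_indicatorOne]
    exact ContinuousLinearMap.ext fun g => by simp [U_apply]
  have l_indicatorOne : Λ (U (indicatorOne A)) = semivariation S A := by
    rw [hΛ, U_indicatorOne]
    rfl
  have abs_le (f) : |Λ (U f)| ≤ ‖U f‖ := by simpa using Λ.le_of_opNorm_le Λ_norm_le (U f)
  refine ⟨Λ ∘L U, isPositive_of_forall_abs_le fun f => ?_, fun B => ?_, l_indicatorOne⟩
  · change |Λ (U f)| ≤ Λ (U 1) * ‖f‖
    rw [U_one, l_indicatorOne]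
    refine (abs_le f).trans (ContinuousLinearMap.opNorm_le_bound _
      (mul_nonneg (semivariation_nonneg S A) (norm_nonneg f)) fun g => ?_)
    rw [U_apply, mul_assoc, mul_assoc]
    exact (norm_map_indicatorOne_mul_le S A (f * g)).trans
      (mul_le_mul_of_nonneg_left (norm_mul_le f g) (semivariation_nonneg S A))
  · refine (le_abs_self _).trans ((abs_le _).trans
      (ContinuousLinearMap.opNorm_le_bound _ (semivariation_nonneg S B) fun g => ?_))
    rw [U_apply, mul_right_comm, mul_comm]
    refine (norm_map_indicatorOne_mul_le S B _).trans
      (mul_le_mul_of_nonneg_left (norm_indicatorOne_mul_le A g) (semivariation_nonneg S B))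

end PositiveFunctional

section Control

variable {X : Type*} [NormedAddCommGroup X] [NormedSpace ℝ X] {S : BoundedMeasurable Ω →L[ℝ] X}
  {ε : ℝ}

lemma exists_isPositive_semivariation_le (hS : ¬ FixesC0 S) (hε : 0 < ε) :
    ∃ l : BoundedMeasurable Ω →L[ℝ] ℝ, IsPositive l ∧
      ∀ A, l (indicatorOne A) < 1 → semivariation S A ≤ ε := by
  choose l l_pos l_le l_eq using exists_isPositive_apply_indicatorOne_eq S
  obtain ⟨F, δ, hδ, hF⟩ := (isExhaustive_semivariation hS).exists_finset_forall_lt_imp_le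
    (isSubmeasure_semivariation S) (fun A => (l_pos A).isSubmeasure) l_le
    (fun A => ⟨A, (l_eq A).ge⟩) hε
  refine ⟨δ⁻¹ • ∑ B ∈ F, l B, (IsPositive.sum l_pos).smul (by positivity),
    fun A hA => hF A fun B hB => ?_⟩
  have sum_lt : ∑ B ∈ F, l B (indicatorOne A) < δ := by
    simpa [inv_mul_lt_iff₀ hδ] using hA
  exact (Finset.single_le_sum (f := fun B => l B (indicatorOne A))
    (fun B _ => (l_pos B).isSubmeasure.nonneg A) hB).trans_lt sum_lt

/-- A function large compared with `ε` on a non-negligible set has a large square mean, and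
otherwise its large part contributes little to `S f`. -/
theorem exists_isPositive_norm_map_le (hS : ¬ FixesC0 S) (hε : 0 < ε) :
    ∃ l : BoundedMeasurable Ω →L[ℝ] ℝ, IsPositive l ∧
      ∀ f, ‖S f‖ ≤ √(l (f * f)) + ε * ‖f‖ := by
  obtain ⟨η, hη, hSη⟩ := exists_pos_mul_lt (half_pos hε) ‖S‖
  obtain ⟨l, l_pos, hl⟩ := exists_isPositive_semivariation_le hS (half_pos hε)
  refine ⟨(‖S‖ / η) ^ 2 • l, l_pos.smul (sq_nonneg _), fun f => ?_⟩
  let A : {A : Set Ω // MeasurableSet A} :=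
    ⟨{x | η * ‖f‖ ≤ |f x|}, measurableSet_le measurable_const f.measurable.abs⟩
  obtain hA | hA := le_or_gt 1 (l (indicatorOne A))
  · have sq_le : (η * ‖f‖) ^ 2 ≤ l (f * f) :=
      (le_mul_of_one_le_right (sq_nonneg _) hA).trans
        (l_pos.sq_mul_apply_indicatorOne_le (by positivity) fun x hx => hx)
    calc ‖S f‖ ≤ ‖S‖ * ‖f‖ := S.le_opNorm f
      _ = √((‖S‖ / η) ^ 2 * (η * ‖f‖) ^ 2) := by
          rw [← mul_pow, Real.sqrt_sq (by positivity)]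
          field_simp
      _ ≤ √((‖S‖ / η) ^ 2 * l (f * f)) := by gcongr
      _ ≤ √((‖S‖ / η) ^ 2 * l (f * f)) + ε * ‖f‖ := le_add_of_nonneg_right (by positivity)
  · have norm_rest_le : ‖f - indicatorOne A * f‖ ≤ η * ‖f‖ :=
      norm_le_of_forall_abs_le (by positivity) fun x => by
        by_cases hx : η * ‖f‖ ≤ |f x|
        · simpa [A, hx] using mul_nonneg hη.le (norm_nonneg f)
        · simpa [A, hx] using (not_le.1 hx).le
    calc ‖S f‖ = ‖S (indicatorOne A * f) + S (f - indicatorOne A * f)‖ := by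
          rw [← map_add, add_sub_cancel]
      _ ≤ ε / 2 * ‖f‖ + ‖S‖ * (η * ‖f‖) := by
          refine norm_add_le_of_le ((norm_map_indicatorOne_mul_le S A f).trans ?_)
            (S.le_opNorm_of_le norm_rest_le)
          gcongr
          exact hl A hA
      _ ≤ ε / 2 * ‖f‖ + ε / 2 * ‖f‖ := by
          rw [← mul_assoc]
          gcongr
      _ = ε * ‖f‖ := by ring
      _ ≤ _ := le_add_of_nonneg_left (Real.sqrt_nonneg _)

end Control

section Hilbertian

variable {l : BoundedMeasurable Ω →L[ℝ] ℝ}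

theorem isAlmostHilbertian_of_not_fixesC0 {X : Type*} [NormedAddCommGroup X] [NormedSpace ℝ X]
    {S : BoundedMeasurable Ω →L[ℝ] X} (hS : ¬ FixesC0 S) : IsAlmostHilbertian S := fun ε hε => by
  obtain ⟨l, l_pos, hl⟩ := exists_isPositive_norm_map_le hS hε
  refine ⟨(LinearMap.mul ℝ (BoundedMeasurable Ω)).compr₂ l, l 1,
    fun f => l_pos _ fun x => mul_self_nonneg (f x), fun f hf => l_pos.mono fun x => ?_, hl⟩
  exact abs_le_one_iff_mul_self_le_one.1 ((abs_apply_le_norm f x).trans hf)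

/-- Grothendieck's argument: for a basis `v` of `Z` orthonormal with respect to `l (f * g)`, the
hypothesis bounds `∑ (v i x) ^ 2` by `D ^ 2` at each point `x`, while `l` maps this sum to the
dimension of `Z`. -/
theorem IsPositive.finrank_le (hl : IsPositive l) {Z : Submodule ℝ (BoundedMeasurable Ω)}
    [FiniteDimensional ℝ Z] {D : ℝ} (hZ : ∀ f ∈ Z, ‖f‖ ≤ D * √(l (f * f))) :
    Module.finrank ℝ Z ≤ D ^ 2 * l 1 := by
  let Q : QuadraticForm ℝ Z := .comp (LinearMap.BilinMap.toQuadraticMap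
    ((LinearMap.mul ℝ (BoundedMeasurable Ω)).compr₂ l.toLinearMap)) Z.subtype
  have Q_posDef : Q.PosDef := fun f hf => by
    have norm_pos : 0 < ‖(f : BoundedMeasurable Ω)‖ := by simpa using hf
    have := norm_pos.trans_le (hZ f f.2)
    contrapose! this
    simp [Real.sqrt_eq_zero_of_nonpos (show l (f * f) ≤ 0 from this)]
  obtain ⟨v, hv⟩ := exists_basis_map_sum_smul_eq_sum_sq Q_posDef
  have l_v_mul_v (i) : l (v i * v i) = 1 := by
    have : Q (v i) = 1 := by simpa [Pi.single_apply] using hv (Pi.single i 1)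
    exact this
  have sum_sq_le (x) : ∑ i, (v i : BoundedMeasurable Ω) x ^ 2 ≤ D ^ 2 := by
    set q := ∑ i, (v i : BoundedMeasurable Ω) x ^ 2
    have q_nonneg : 0 ≤ q := Finset.sum_nonneg fun i _ => sq_nonneg _
    let f : Z := ∑ i, (v i : BoundedMeasurable Ω) x • v i
    have f_apply : (f : BoundedMeasurable Ω) x = q := by simp [f, q, pow_two]
    have l_f_mul_f : l (f * f) = q := hv fun i => (v i : BoundedMeasurable Ω) x
    have q_le : q ≤ D * √q := by
      simpa [f_apply, l_f_mul_f, abs_of_nonneg q_nonneg] using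
        (abs_apply_le_norm _ x).trans (hZ f f.2)
    nlinarith [sq_nonneg (D - √q), Real.sq_sqrt q_nonneg]
  calc (Module.finrank ℝ Z : ℝ) = l (∑ i, (v i * v i : BoundedMeasurable Ω)) := by
        simp [l_v_mul_v]
    _ ≤ l (D ^ 2 • 1) := hl.mono fun x => by simpa [pow_two] using sum_sq_le x
    _ = D ^ 2 * l 1 := by simp

end Hilbertian

section EssentiallyBounded

variable {μ : Measure Ω}

lemma memLp_top (f : BoundedMeasurable Ω) : MemLp f ∞ μ :=
  memLp_top_of_bound f.measurable.aestronglyMeasurable ‖f‖ (.of_forall f.abs_apply_le_norm)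

/-- The quotient map onto `L_∞(μ)`, identifying functions that agree almost everywhere. -/
noncomputable def toLinfty (μ : Measure Ω) : BoundedMeasurable Ω →L[ℝ] Lp ℝ ∞ μ :=
  LinearMap.mkContinuous
    { toFun := fun f => f.memLp_top.toLp f
      map_add' := fun _ _ => rfl
      map_smul' := fun _ _ => rfl } 1 fun f => by
    change ‖f.memLp_top.toLp f‖ ≤ 1 * ‖f‖
    rw [one_mul, Lp.norm_toLp, eLpNorm_exponent_top]
    exact ENNReal.toReal_le_of_le_ofReal (norm_nonneg f)
      (eLpNormEssSup_le_of_ae_bound (.of_forall f.abs_apply_le_norm))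

lemma coeFn_toLinfty (f : BoundedMeasurable Ω) : toLinfty μ f =ᵐ[μ] f :=
  f.memLp_top.coeFn_toLp

lemma ae_abs_le_norm (F : Lp ℝ ∞ μ) : ∀ᵐ x ∂μ, |F x| ≤ ‖F‖ := by
  filter_upwards [ae_le_eLpNormEssSup (f := F) (μ := μ)] with x hx
  rw [← eLpNorm_exponent_top] at hx
  simpa [Lp.norm_def] using ENNReal.toReal_mono (Lp.eLpNorm_ne_top F) hx

lemma exists_toLinfty_eq (F : Lp ℝ ∞ μ) : ∃ f, toLinfty μ f = F ∧ ‖f‖ ≤ ‖F‖ := by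
  have F_measurable : Measurable F := (Lp.stronglyMeasurable F).measurable
  let f : BoundedMeasurable Ω := ofBound (c := ‖F‖)
    (measurable_const.max (F_measurable.min measurable_const) :
      Measurable fun x => max (-‖F‖) (min (F x) ‖F‖)) fun x =>
    abs_le.2 ⟨le_max_left _ _, max_le (neg_le_self (norm_nonneg F)) (min_le_right _ _)⟩
  refine ⟨f, Lp.ext ?_, norm_le_of_forall_abs_le (norm_nonneg F) fun x =>
    abs_le.2 ⟨le_max_left _ _, max_le (neg_le_self (norm_nonneg F)) (min_le_right _ _)⟩⟩
  filter_upwards [coeFn_toLinfty f, ae_abs_le_norm F] with x hx abs_F_le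
  rw [abs_le] at abs_F_le
  simp [hx, f, abs_F_le.1, abs_F_le.2]

/-- Discarding a null set turns the almost everywhere bounds on a countable dense set of vectors
into a uniform bound for all of them. -/
lemma exists_linearMap_toLinfty_eq {V : Type*} [NormedAddCommGroup V] [NormedSpace ℝ V]
    [FiniteDimensional ℝ V] (j : V →ₗ[ℝ] Lp ℝ ∞ μ) :
    ∃ s : V →ₗ[ℝ] BoundedMeasurable Ω, ∀ v, toLinfty μ (s v) = j v ∧ ‖s v‖ ≤ ‖j v‖ := by
  obtain ⟨g, hg⟩ := (toLinfty μ).toLinearMap.exists_rightInverse_of_surjective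
    (LinearMap.range_eq_top.2 fun F => (exists_toLinfty_eq F).imp fun _ => And.left)
  have toLinfty_g (F) : toLinfty μ (g F) = F := LinearMap.congr_fun hg F
  have : ProperSpace V := FiniteDimensional.proper_real V
  have ae_bound : ∀ᵐ x ∂μ, ∀ v, |g (j v) x| ≤ ‖j v‖ := by
    have dense_bound : ∀ᵐ x ∂μ, ∀ n, |g (j (TopologicalSpace.denseSeq V n)) x| ≤
        ‖j (TopologicalSpace.denseSeq V n)‖ := ae_all_iff.2 fun n => by
      filter_upwards [coeFn_toLinfty (μ := μ) (g (j (TopologicalSpace.denseSeq V n))),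
        ae_abs_le_norm (j (TopologicalSpace.denseSeq V n))] with x coeFn_eq abs_le
      rwa [← coeFn_eq, toLinfty_g]
    filter_upwards [dense_bound] with x hx v
    have j_continuous : Continuous j := j.continuous_of_finiteDimensional
    have eval_continuous : Continuous (eval x ∘ₗ g ∘ₗ j) :=
      LinearMap.continuous_of_finiteDimensional _
    exact (TopologicalSpace.denseRange_denseSeq V).induction_on v
      (isClosed_le eval_continuous.abs j_continuous.norm) hx
  obtain ⟨A, A_ae, A_measurable, hA⟩ := ae_bound.exists_measurable_mem
  refine ⟨LinearMap.mulLeft ℝ (indicatorOne ⟨A, A_measurable⟩) ∘ₗ g ∘ₗ j, fun v =>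
    ⟨?_, norm_le_of_forall_abs_le (norm_nonneg _) fun x => ?_⟩⟩
  · rw [← toLinfty_g (j v)]
    refine Lp.ext ?_
    simp only [LinearMap.comp_apply, LinearMap.mulLeft_apply]
    filter_upwards [A_ae, coeFn_toLinfty (μ := μ) (g (j v)),
      coeFn_toLinfty (μ := μ) (indicatorOne ⟨A, A_measurable⟩ * g (j v))] with x hx h₁ h₂
    simp [h₁, h₂, hx]
  · by_cases hx : x ∈ A
    · simpa [hx] using hA x hx v
    · simp [hx]

variable {X : Type*} [NormedAddCommGroup X] [NormedSpace ℝ X] {T : Lp ℝ ∞ μ →L[ℝ] X}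

lemma weaklyCompactOperator_of_comp_toLinfty (hT : WeaklyCompactOperator (T ∘L toLinfty μ)) :
    WeaklyCompactOperator T := by
  refine hT.of_isClosed_subset isClosed_closure (closure_mono ?_)
  rintro _ ⟨F, hF, rfl⟩
  obtain ⟨f, rfl, hf⟩ := exists_toLinfty_eq F
  rw [mem_closedBall_zero_iff] at hF
  exact ⟨f, mem_closedBall_zero_iff.2 (hf.trans hF), rfl⟩

theorem strictlySingular_of_not_fixesC0 (hT : ¬ FixesC0 T) : StrictlySingular T := by
  rintro Y - Y_infinite ⟨c, hc, hY⟩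
  obtain ⟨l, l_pos, hl⟩ := exists_isPositive_norm_map_le (S := T ∘L toLinfty μ)
    (fun h => hT h.of_comp) (half_pos hc)
  obtain ⟨n, hn⟩ := exists_nat_gt ((2 / c) ^ 2 * l 1)
  obtain ⟨j, j_injective⟩ : ∃ j : (Fin n → ℝ) →ₗ[ℝ] Y, Function.Injective j := by
    refine Module.le_rank_iff_exists_linearMap.1 (Cardinal.natCast_le_aleph0.trans (not_lt.1 ?_))
    rwa [Module.rank_lt_aleph0_iff]
  obtain ⟨s, hs⟩ := exists_linearMap_toLinfty_eq (Y.subtype ∘ₗ j)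
  have s_injective : Function.Injective s := fun u v huv => j_injective (Subtype.ext (by
    simpa [(hs _).1] using congrArg (toLinfty μ) huv))
  have norm_le (f) (hf : f ∈ LinearMap.range s) : ‖f‖ ≤ 2 / c * √(l (f * f)) := by
    obtain ⟨v, rfl⟩ := hf
    have c_mul_norm_le := calc
      c * ‖s v‖ ≤ c * ‖j v‖ := mul_le_mul_of_nonneg_left (hs v).2 hc.le
      _ ≤ ‖T (toLinfty μ (s v))‖ := by
          rw [(hs v).1]
          exact hY _ (j v).2
      _ ≤ √(l (s v * s v)) + c / 2 * ‖s v‖ := hl (s v)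
    rw [div_mul_eq_mul_div, le_div_iff₀ hc]
    linarith
  have := l_pos.finrank_le norm_le
  rw [LinearMap.finrank_range_of_inj s_injective, Module.finrank_fin_fun] at this
  exact this.not_gt hn

end EssentiallyBounded

end BoundedMeasurable

theorem statement7_general {Ω : Type*} [MeasurableSpace Ω] {μ : Measure Ω} {X : Type*}
    [NormedAddCommGroup X] [NormedSpace ℝ X] [CompleteSpace X] {T : Lp ℝ ∞ μ →L[ℝ] X}
    (hT : ¬ FixesC0 T) : WeaklyCompactOperator T ∧ StrictlySingular T :=
  have hS : ¬ FixesC0 (T ∘L BoundedMeasurable.toLinfty μ) := fun h => hT h.of_comp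
  ⟨BoundedMeasurable.weaklyCompactOperator_of_comp_toLinfty
    (BoundedMeasurable.isAlmostHilbertian_of_not_fixesC0 hS).weaklyCompactOperator,
    BoundedMeasurable.strictlySingular_of_not_fixesC0 hT⟩

/-- Every bounded operator from `L_∞[0,1]` into a Banach space `X`
containing no subspace isomorphic to `c₀` is weakly compact, and hence strictly
singular. -/
theorem statement7 {X : Type*} [NormedAddCommGroup X] [NormedSpace ℝ X] [CompleteSpace X]
    (hX : ¬ ContainsC0 X) (T : Lp ℝ ∞ μ01 →L[ℝ] X) :
    WeaklyCompactOperator T ∧ StrictlySingular T := by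
  exact statement7_general fun h => hX h.containsC0
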